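/- Let R be a finite commutative chain ring of nilpotency index e with residue field F_q, and let n be a positive integer with gcd(n,q)=1. For every unit a of R, the number of n×n circulant matrices over R with determinant a equals q^{e(n-1)} ∏_{d|n, d≠1} (1 - q^{-ord_d(q)})^{φ(d)/ord_d(q)}. -/

import Mathlib

/-!
Circulants of order `n` are the regular representation of `A = R[X] / (Xⁿ - 1)`, with the
determinant as the norm `A → R`. If `J` is the all-ones matrix, `det (1 + t J) = 1 + n t`, so the
norm is surjective once `n` is invertible, and its fibres over `Rˣ` all have `|Aˣ| / |Rˣ|` elements.
Being a unit is detected in the residue field `k`, and `Xⁿ - 1` is separable over `k`: by the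
Chinese remainder theorem `k[X] / (Xⁿ - 1)` is the product of the `k[X] / (Φ_d)` with `d ∣ n`,
each of them a product of `φ(d) / ord_d(q)` fields of degree `ord_d(q)` over `k`.
-/

open Polynomial Matrix IsLocalRing UniqueFactorizationMonoid

lemma card_subtype_of_surjective {G H : Type*} [AddGroup G] [AddGroup H] {F : G →+ H}
    (hF : Function.Surjective F) {p : G → Prop} {q : H → Prop} (h : ∀ x, p x ↔ q (F x)) :
    Nat.card {x // p x} = Nat.card F.ker * Nat.card {y // q y} := by
  rw [mul_comm, ← Nat.card_prod]
  exact Nat.card_congr <| (Equiv.sigmaSubtypeFiberEquivSubtype F h).symm.trans <|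
    (Equiv.sigmaCongrRight fun y : Subtype q => F.fiberEquivKerOfSurjective hF y).trans <|
    Equiv.sigmaEquivProd _ _

lemma card_fiber_mul_card {G H : Type*} [Group G] [Group H] {f : G →* H}
    (hf : Function.Surjective f) (h : H) :
    Nat.card {g // f g = h} * Nat.card H = Nat.card G := by
  rw [Subgroup.card_eq_card_quotient_mul_card_subgroup f.ker,
    Nat.card_congr (QuotientGroup.quotientKerEquivOfSurjective f hf).toEquiv, mul_comm]
  exact congrArg _ (Nat.card_congr (MonoidHom.fiberEquivKerOfSurjective hf h))

lemma card_subtype_isUnit (M : Type*) [Monoid M] : Nat.card {x : M // IsUnit x} = Nat.card Mˣ :=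
  Nat.card_congr Submonoid.unitsTypeEquivIsUnitSubmonoid.symm.toEquiv

lemma isUnit_natCast_of_coprime_card {R : Type*} [CommRing R] [Finite R] {n : ℕ}
    (hn : n.Coprime (Nat.card R)) : IsUnit (n : R) := by
  have := Fintype.ofFinite R
  have hcop : IsCoprime (n : R) (Nat.card R : R) := hn.cast
  rwa [Nat.card_eq_fintype_card, Nat.cast_card_eq_zero, isCoprime_zero_right] at hcop

lemma isUnit_algebraNorm_iff {R A : Type*} [CommRing R] [CommRing A] [Algebra R A]
    [Module.Free R A] [Module.Finite R A] {x : A} : IsUnit (Algebra.norm R x) ↔ IsUnit x := by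
  rw [Algebra.norm_apply, ← LinearMap.isUnit_iff_isUnit_det, Algebra.lmul_isUnit_iff]

lemma card_norm_eq_mul_card_units {R A : Type*} [CommRing R] [CommRing A] [Algebra R A]
    [Module.Free R A] [Module.Finite R A]
    (hsurj : Function.Surjective (Algebra.norm R : A →* R)) (a : Rˣ) :
    Nat.card {x : A // Algebra.norm R x = a} * Nat.card Rˣ = Nat.card Aˣ := by
  have hunits : Function.Surjective (Units.map (Algebra.norm R : A →* R)) := by
    intro c
    obtain ⟨x, hx⟩ := hsurj c
    exact ⟨(isUnit_algebraNorm_iff.1 (hx ▸ c.isUnit)).unit, Units.ext hx⟩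
  let fiberEquiv : {x : A // Algebra.norm R x = a} ≃
      {u : Aˣ // Units.map (Algebra.norm R : A →* R) u = a} :=
    { toFun := fun x => ⟨(isUnit_algebraNorm_iff.1 (x.2 ▸ a.isUnit)).unit, Units.ext x.2⟩
      invFun := fun u => ⟨u.1, congrArg Units.val u.2⟩
      left_inv := fun _ => rfl
      right_inv := fun _ => Subtype.ext (Units.ext rfl) }
  rw [← card_fiber_mul_card hunits a, Nat.card_congr fiberEquiv]

lemma exists_det_circulant_eq {R G : Type*} [CommRing R] [AddGroup G] [Fintype G] [DecidableEq G]
    (hG : IsUnit (Fintype.card G : R)) (c : R) : ∃ v : G → R, (circulant v).det = c := by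
  obtain ⟨u, hu⟩ := hG
  let t : R := ↑u⁻¹ * (c - 1)
  have hrankOne : circulant (Pi.single 0 1 + fun _ => t : G → R) =
      1 + replicateCol Unit (fun _ => t) * replicateRow Unit (fun _ => (1 : R)) := by
    rw [circulant_add, circulant_single_one]
    congr 1
    ext i j
    simp [Matrix.mul_apply]
  refine ⟨Pi.single 0 1 + fun _ => t, ?_⟩
  rw [hrankOne, det_one_add_replicateCol_mul_replicateRow]
  simp [dotProduct, t, ← hu]

section GroupBasis

variable {R A G : Type*} [CommRing R] [CommRing A] [Algebra R A] [AddGroup G] [Fintype G]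
  [DecidableEq G] {b : Module.Basis G R A}

lemma leftMulMatrix_equivFun_symm_eq_circulant (hb : ∀ i j, b i * b j = b (i + j)) (v : G → R) :
    Algebra.leftMulMatrix b (b.equivFun.symm v) = circulant v := by
  ext i j
  simp only [Algebra.leftMulMatrix_eq_repr_mul, Module.Basis.equivFun_symm_apply, Finset.sum_mul,
    smul_mul_assoc, hb, map_sum, map_smul, Module.Basis.repr_self, Finsupp.coe_finsetSum,
    Finset.sum_apply, Finsupp.smul_apply, Finsupp.single_apply, ← eq_sub_iff_add_eq, smul_eq_mul,
    mul_ite, mul_one, mul_zero, Finset.sum_ite_eq', Finset.mem_univ, if_true, circulant_apply]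

lemma norm_equivFun_symm_eq_det_circulant (hb : ∀ i j, b i * b j = b (i + j)) (v : G → R) :
    Algebra.norm R (b.equivFun.symm v) = (circulant v).det := by
  rw [Algebra.norm_eq_matrix_det b, leftMulMatrix_equivFun_symm_eq_circulant hb]

lemma card_isUnit_det_circulant_eq_card_units (hb : ∀ i j, b i * b j = b (i + j)) :
    Nat.card {v : G → R // IsUnit (circulant v).det} = Nat.card Aˣ := by
  have := Module.Free.of_basis b
  have := Module.Finite.of_basis b
  rw [← card_subtype_isUnit A]
  exact Nat.card_congr <| b.equivFun.symm.toEquiv.subtypeEquiv fun v => by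
    rw [← norm_equivFun_symm_eq_det_circulant hb, isUnit_algebraNorm_iff]
    rfl

lemma card_det_circulant_eq_mul_card_units (hb : ∀ i j, b i * b j = b (i + j))
    (hG : IsUnit (Fintype.card G : R)) (a : Rˣ) :
    Nat.card {v : G → R // (circulant v).det = a} * Nat.card Rˣ =
      Nat.card {v : G → R // IsUnit (circulant v).det} := by
  have := Module.Free.of_basis b
  have := Module.Finite.of_basis b
  have hnorm := norm_equivFun_symm_eq_det_circulant hb
  have hsurj : Function.Surjective (Algebra.norm R : A →* R) := fun c =>
    (exists_det_circulant_eq hG c).imp' b.equivFun.symm fun v hv => (hnorm v).trans hv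
  rw [card_isUnit_det_circulant_eq_card_units hb, ← card_norm_eq_mul_card_units hsurj a]
  refine congrArg (· * _) <| Nat.card_congr <| b.equivFun.symm.toEquiv.subtypeEquiv fun v => ?_
  rw [← hnorm]
  rfl

end GroupBasis

lemma root_X_pow_sub_one_pow (R : Type*) [CommRing R] (n : ℕ) :
    AdjoinRoot.root (X ^ n - 1 : R[X]) ^ n = 1 := by
  have hroot := AdjoinRoot.eval₂_root (X ^ n - 1 : R[X])
  rwa [eval₂_sub, eval₂_X_pow, eval₂_one, sub_eq_zero] at hroot

section ZModBasis

variable {R A : Type*} [CommRing R] [CommRing A] [Algebra R A] (pb : PowerBasis R A) {n : ℕ}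
  [NeZero n] (hdim : pb.dim = n)

/-- The power basis `1, x, …, xⁿ⁻¹` with its exponents read in `ZMod n`. When `xⁿ = 1` it is
multiplicative, so that `A` is the group algebra of `ZMod n`. -/
noncomputable def zmodBasis : Module.Basis (ZMod n) R A :=
  pb.basis.reindex ((finCongr hdim).trans (ZMod.finEquiv n).toEquiv)

lemma zmodBasis_apply (i : ZMod n) : zmodBasis pb hdim i = pb.gen ^ i.val := by
  have hval : ((ZMod.finEquiv n).symm i).val = i.val := by
    obtain _ | m := n
    · exact (NeZero.ne 0 rfl).elim
    · rfl
  rw [zmodBasis, Module.Basis.reindex_apply, PowerBasis.basis_eq_pow, ← hval]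
  rfl

lemma zmodBasis_mul_zmodBasis (hgen : pb.gen ^ n = 1) (i j : ZMod n) :
    zmodBasis pb hdim i * zmodBasis pb hdim j = zmodBasis pb hdim (i + j) := by
  simp only [zmodBasis_apply]
  rw [← pow_add, ZMod.val_add, ← pow_eq_pow_mod _ hgen]

end ZModBasis

lemma exists_multiplicative_basis_adjoinRoot_X_pow_sub_one (R : Type*) [CommRing R] [Nontrivial R]
    (n : ℕ) [NeZero n] : ∃ b : Module.Basis (ZMod n) R (AdjoinRoot (X ^ n - 1 : R[X])),
      ∀ i j, b i * b j = b (i + j) :=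
  have hmonic : (X ^ n - 1 : R[X]).Monic := monic_X_pow_sub_C 1 (NeZero.ne n)
  ⟨zmodBasis (AdjoinRoot.powerBasis' hmonic) natDegree_X_pow_sub_C,
    zmodBasis_mul_zmodBasis _ _ (root_X_pow_sub_one_pow R n)⟩

lemma card_units_quotient_span_prod {A ι : Type*} [CommRing A] {s : Finset ι} {f : ι → A}
    (hf : (s : Set ι).Pairwise (Function.onFun IsCoprime f)) :
    Nat.card (A ⧸ Ideal.span {∏ i ∈ s, f i})ˣ = ∏ i ∈ s, Nat.card (A ⧸ Ideal.span {f i})ˣ := by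
  have hs : Pairwise (Function.onFun IsCoprime fun i : s => f i) :=
    fun i j hij => hf i.2 j.2 (Subtype.coe_ne_coe.2 hij)
  have hspan : Ideal.span {∏ i ∈ s, f i} = ⨅ i : s, Ideal.span {f i} := by
    rw [Ideal.iInf_span_singleton hs, Finset.prod_coe_sort s f]
  let crt : (A ⧸ Ideal.span {∏ i ∈ s, f i}) ≃+* ∀ i : s, A ⧸ Ideal.span {f i} :=
    (Ideal.quotEquivOfEq hspan).trans <| Ideal.quotientInfRingEquivPiQuotient _
      fun i j hij => (Ideal.isCoprime_span_singleton_iff _ _).2 (hs hij)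
  rw [Nat.card_congr ((Units.mapEquiv crt.toMulEquiv).trans MulEquiv.piUnits).toEquiv,
    Nat.card_pi, Finset.prod_coe_sort s fun i => Nat.card (A ⧸ Ideal.span {f i})ˣ]

section Field

variable {K : Type*} [Field K]

lemma card_units_adjoinRoot_of_irreducible {f : K[X]} (hf : Irreducible f) :
    Nat.card (AdjoinRoot f)ˣ = Nat.card K ^ f.natDegree - 1 := by
  have : Fact (Irreducible f) := ⟨hf⟩
  have : Module.Finite K (AdjoinRoot f) := (AdjoinRoot.powerBasis hf.ne_zero).finite
  rw [Nat.card_units, Module.natCard_eq_pow_finrank (K := K),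
    (AdjoinRoot.powerBasis hf.ne_zero).finrank, AdjoinRoot.powerBasis_dim]

lemma card_units_adjoinRoot_of_squarefree [DecidableEq K] {f : K[X]} (hf : Squarefree f) :
    Nat.card (AdjoinRoot f)ˣ = ∏ P ∈ primeFactors f, (Nat.card K ^ P.natDegree - 1) := by
  have hspan : Ideal.span {f} = Ideal.span {∏ P ∈ primeFactors f, P} :=
    Ideal.span_singleton_eq_span_singleton.2 (radical_associated hf.isRadical hf.ne_zero).symm
  have hcop : (primeFactors f : Set K[X]).Pairwise (Function.onFun IsCoprime id) :=
    fun P hP Q hQ hPQ => isRelPrime_iff_isCoprime.1 (pairwise_primeFactors_isRelPrime hP hQ hPQ)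
  calc
    Nat.card (AdjoinRoot f)ˣ = Nat.card (K[X] ⧸ Ideal.span {∏ P ∈ primeFactors f, P})ˣ :=
      Nat.card_congr (Units.mapEquiv (Ideal.quotEquivOfEq hspan).toMulEquiv).toEquiv
    _ = ∏ P ∈ primeFactors f, Nat.card (AdjoinRoot P)ˣ := card_units_quotient_span_prod hcop
    _ = ∏ P ∈ primeFactors f, (Nat.card K ^ P.natDegree - 1) :=
      Finset.prod_congr rfl fun P hP => card_units_adjoinRoot_of_irreducible <|
        irreducible_of_normalized_factor P (mem_primeFactors.1 hP)

lemma card_units_adjoinRoot_cyclotomic [Finite K] {n : ℕ} (hn : n.Coprime (Nat.card K)) :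
    Nat.card (AdjoinRoot (cyclotomic n K))ˣ =
      (Nat.card K ^ orderOf (Nat.card K : ZMod n) - 1) ^
        (n.totient / orderOf (Nat.card K : ZMod n)) := by
  classical
  have := Fintype.ofFinite K
  have : NeZero (n : K) := ⟨(isUnit_natCast_of_coprime_card hn).ne_zero⟩
  obtain ⟨p, -, k, hp, hK⟩ := FiniteField.card' K
  have : Fact p.Prime := ⟨hp⟩
  have hq : Nat.card K = p ^ (k : ℕ) := Nat.card_eq_fintype_card.trans hK
  have hpn : p.Coprime n := ((Nat.coprime_pow_right_iff k.pos n p).1 (hq ▸ hn)).symm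
  have hord : orderOf (ZMod.unitOfCoprime _ (hpn.pow_left k)) = orderOf (Nat.card K : ZMod n) := by
    rw [← orderOf_units, ZMod.coe_unitOfCoprime, hq]
  have hdeg : ∀ P ∈ primeFactors (cyclotomic n K),
      P.natDegree = orderOf (Nat.card K : ZMod n) := fun P hP =>
    (natDegree_of_mem_normalizedFactors_cyclotomic hK hpn (mem_primeFactors.1 hP)).trans hord
  have hcard : (primeFactors (cyclotomic n K)).card =
      n.totient / orderOf (Nat.card K : ZMod n) := by
    rw [← toFinset_normalizedFactors, normalizedFactors_cyclotomic_card hK hpn, hord]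
  rw [card_units_adjoinRoot_of_squarefree (squarefree_cyclotomic n K), ← hcard]
  refine Finset.prod_eq_pow_card fun P hP => ?_
  rw [hdeg P hP]

lemma isCoprime_cyclotomic {n i j : ℕ} (hn : (n : K) ≠ 0) (hi : i ∣ n) (hj : j ∣ n)
    (hij : i ≠ j) : IsCoprime (cyclotomic i K) (cyclotomic j K) := by
  have hn0 : n ≠ 0 := by
    rintro rfl
    exact hn Nat.cast_zero
  have hdvd : cyclotomic i K * cyclotomic j K ∣ X ^ n - 1 := by
    rw [← prod_cyclotomic_eq_X_pow_sub_one (Nat.pos_of_ne_zero hn0),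
      ← Finset.prod_pair (f := (cyclotomic · K)) hij]
    refine Finset.prod_dvd_prod_of_subset _ _ _ ?_
    simp [Finset.insert_subset_iff, hi, hj, hn0]
  exact ((X_pow_sub_one_separable_iff.2 hn).of_dvd hdvd).isCoprime

lemma card_units_adjoinRoot_X_pow_sub_one [Finite K] {n : ℕ}
    (hn : n.Coprime (Nat.card K)) :
    Nat.card (AdjoinRoot (X ^ n - 1 : K[X]))ˣ = ∏ d ∈ n.divisors,
      (Nat.card K ^ orderOf (Nat.card K : ZMod d) - 1) ^
        (d.totient / orderOf (Nat.card K : ZMod d)) := by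
  have hnK : (n : K) ≠ 0 := (isUnit_natCast_of_coprime_card hn).ne_zero
  have hn0 : n ≠ 0 := by
    rintro rfl
    exact hnK Nat.cast_zero
  have hcop : (n.divisors : Set ℕ).Pairwise (Function.onFun IsCoprime (cyclotomic · K)) :=
    fun i hi j hj =>
      isCoprime_cyclotomic hnK (Nat.dvd_of_mem_divisors hi) (Nat.dvd_of_mem_divisors hj)
  rw [← prod_cyclotomic_eq_X_pow_sub_one (Nat.pos_of_ne_zero hn0) K]
  exact (card_units_quotient_span_prod hcop).trans <| Finset.prod_congr rfl fun d hd =>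
    card_units_adjoinRoot_cyclotomic (hn.coprime_dvd_left (Nat.dvd_of_mem_divisors hd))

end Field

section LocalRing

variable {R : Type*} [CommRing R] [IsLocalRing R]

lemma card_units_eq_card_maximalIdeal_mul :
    Nat.card Rˣ = Nat.card (maximalIdeal R) * Nat.card (ResidueField R)ˣ := by
  have hker : (residue R).toAddMonoidHom.ker = (maximalIdeal R).toAddSubgroup :=
    AddSubgroup.ext residue_eq_zero_iff
  rw [← card_subtype_isUnit R, ← card_subtype_isUnit (ResidueField R),
    card_subtype_of_surjective (F := (residue R).toAddMonoidHom) residue_surjective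
      fun x => (isUnit_map_iff (residue R) x).symm, hker]
  rfl

lemma card_isUnit_det_circulant_eq_card_maximalIdeal_pow_mul {G : Type*} [AddGroup G] [Fintype G]
    [DecidableEq G] :
    Nat.card {v : G → R // IsUnit (circulant v).det} = Nat.card (maximalIdeal R) ^ Fintype.card G *
      Nat.card {v : G → ResidueField R // IsUnit (circulant v).det} := by
  let F : (G → R) →+ (G → ResidueField R) := (residue R).toAddMonoidHom.compLeft G
  have hF : Function.Surjective F := residue_surjective.comp_left
  have hdet (v : G → R) : IsUnit (circulant v).det ↔ IsUnit (circulant (F v)).det := by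
    rw [← isUnit_map_iff (residue R), RingHom.map_det]
    rfl
  let kerEquiv : F.ker ≃ (G → maximalIdeal R) :=
    { toFun := fun v i => ⟨v.1 i, (residue_eq_zero_iff _).1 (congrFun v.2 i)⟩
      invFun := fun w => ⟨fun i => w i, funext fun i => (residue_eq_zero_iff _).2 (w i).2⟩
      left_inv := fun _ => rfl
      right_inv := fun _ => rfl }
  rw [card_subtype_of_surjective hF (q := fun w => IsUnit (circulant w).det) hdet,
    Nat.card_congr kerEquiv, Nat.card_fun, Nat.card_eq_fintype_card (α := G)]

-- Multiplication by `x` induces `R ⧸ m ≃ Rx ⧸ mx`, since the annihilator of `x` lies in `m`.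
lemma card_span_singleton_eq_card_residueField_mul {x : R} (hx : x ≠ 0) :
    Nat.card (Ideal.span {x}) =
      Nat.card (ResidueField R) * Nat.card (maximalIdeal R * Ideal.span {x} : Ideal R) := by
  let f : R →+ R := AddMonoidHom.mulRight x
  have hker : f.ker ≤ (maximalIdeal R).toAddSubgroup := fun y (hy : y * x = 0) =>
    (mem_maximalIdeal y).2 fun hu => hx (hu.mul_right_eq_zero.1 hy)
  have htop : AddSubgroup.map f ⊤ = (Ideal.span {x}).toAddSubgroup := by
    ext y
    simp [f, Ideal.mem_span_singleton']
  have hmax : AddSubgroup.map f (maximalIdeal R).toAddSubgroup =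
      (maximalIdeal R * Ideal.span {x}).toAddSubgroup := by
    ext y
    simp [f, Ideal.mem_mul_span_singleton]
  have hindex := AddSubgroup.relIndex_map_map f (maximalIdeal R).toAddSubgroup ⊤
  rw [htop, hmax, sup_eq_left.2 hker, top_sup_eq, AddSubgroup.relIndex_top_right] at hindex
  have htower := AddSubgroup.relIndex_mul_relIndex ⊥ (maximalIdeal R * Ideal.span {x}).toAddSubgroup
    (Ideal.span {x}).toAddSubgroup bot_le Ideal.mul_le_right
  rw [AddSubgroup.relIndex_bot_left, AddSubgroup.relIndex_bot_left] at htower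
  rw [mul_comm]
  exact htower.symm.trans (congrArg _ hindex)

lemma card_maximalIdeal_of_span_singleton {γ : R} (hγ : Ideal.span {γ} = maximalIdeal R) {e : ℕ}
    (he : γ ^ e = 0) (he' : γ ^ (e - 1) ≠ 0) :
    Nat.card (maximalIdeal R) = Nat.card (ResidueField R) ^ (e - 1) := by
  have hpow (i : ℕ) : maximalIdeal R ^ i = Ideal.span {γ ^ i} := by
    rw [← hγ, Ideal.span_singleton_pow]
  have hfiltration : ∀ i, γ ^ i ≠ 0 → Nat.card (maximalIdeal R) =
      Nat.card (ResidueField R) ^ i * Nat.card (maximalIdeal R ^ (i + 1) : Ideal R) := by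
    intro i
    induction i with
    | zero => simp
    | succ i ih =>
      intro hi
      have hi' : γ ^ i ≠ 0 := left_ne_zero_of_mul (pow_succ γ i ▸ hi)
      rw [ih hi', hpow (i + 1), card_span_singleton_eq_card_residueField_mul hi, ← hpow,
        ← mul_assoc, ← pow_succ, ← pow_succ' (maximalIdeal R)]
  obtain _ | e := e
  · simp at he
  · rw [hfiltration _ he', hpow]
    simp [he]

end LocalRing

theorem card_circulant_det_unit_chainRing_general {R : Type*} [CommRing R] [Finite R]
    [IsLocalRing R] {q n : ℕ} (hq : Nat.card (ResidueField R) = q) [NeZero n] (hn : n.Coprime q)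
    (a : Rˣ) :
    Nat.card {v : ZMod n → R // (circulant v).det = (a : R)} =
      Nat.card (maximalIdeal R) ^ (n - 1) * ∏ d ∈ n.divisors.erase 1,
        (q ^ orderOf (q : ZMod d) - 1) ^ (d.totient / orderOf (q : ZMod d)) := by
  subst hq
  have : Finite (ResidueField R) := .of_surjective _ residue_surjective
  have hunit : IsUnit (Fintype.card (ZMod n) : R) := by
    rw [ZMod.card, ← isUnit_map_iff (residue R), map_natCast]
    exact isUnit_natCast_of_coprime_card hn
  obtain ⟨b, hb⟩ := exists_multiplicative_basis_adjoinRoot_X_pow_sub_one R n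
  obtain ⟨c, hc⟩ := exists_multiplicative_basis_adjoinRoot_X_pow_sub_one (ResidueField R) n
  have hfactorOne : (Nat.card (ResidueField R) ^ orderOf (Nat.card (ResidueField R) : ZMod 1) - 1) ^
      (Nat.totient 1 / orderOf (Nat.card (ResidueField R) : ZMod 1)) =
      Nat.card (ResidueField R)ˣ := by
    simp [Subsingleton.elim _ (1 : ZMod 1), Nat.card_units]
  refine Nat.eq_of_mul_eq_mul_right (Nat.card_pos (α := Rˣ)) ?_
  rw [card_det_circulant_eq_mul_card_units hb hunit,
    card_isUnit_det_circulant_eq_card_maximalIdeal_pow_mul, ZMod.card,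
    card_isUnit_det_circulant_eq_card_units hc, card_units_adjoinRoot_X_pow_sub_one hn,
    ← Finset.mul_prod_erase _ _ (Nat.one_mem_divisors.2 (NeZero.ne n)), hfactorOne,
    card_units_eq_card_maximalIdeal_mul (R := R), ← pow_sub_one_mul (NeZero.ne n)]
  ring

/-- Over a commutative finite chain ring `R` of nilpotency index `e` with residue field of size
`q`, and `gcd(n,q) = 1`, for every unit `a` of `R` the number of `n × n` circulant matrices of
determinant `a` equals `q^((e-1)(n-1)) · ∏_{d ∣ n, d ≠ 1} (q^(ord_d q) - 1)^(φ(d)/ord_d q)`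
(the integer form of `q^(e(n-1)) ∏_{d ∣ n, d ≠ 1} (1 - q^(-ord_d q))^(φ(d)/ord_d q)`). -/
theorem card_circulant_det_unit_chainRing {R : Type*} [CommRing R] [Finite R] [IsLocalRing R]
    (hchain : ∀ I J : Ideal R, I ≤ J ∨ J ≤ I)
    (γ : R) (hγ : Ideal.span {γ} = IsLocalRing.maximalIdeal R)
    (q e n : ℕ) (hq : Nat.card (R ⧸ IsLocalRing.maximalIdeal R) = q)
    (he : γ ^ e = 0) (he' : γ ^ (e - 1) ≠ 0)
    [NeZero n] (hgcd : Nat.gcd n q = 1) (a : Rˣ) :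
    Nat.card {v : ZMod n → R // (Matrix.circulant v).det = (a : R)} =
      q ^ ((e - 1) * (n - 1)) * ∏ d ∈ n.divisors.erase 1,
        (q ^ orderOf (q : ZMod d) - 1) ^ (Nat.totient d / orderOf (q : ZMod d)) := by
  have hq : Nat.card (ResidueField R) = q := hq
  rw [card_circulant_det_unit_chainRing_general hq hgcd a,
    card_maximalIdeal_of_span_singleton hγ he he', hq, ← pow_mul]
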